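/- Let φ₁, …, φ_n ∈ ℂ(x) be nonzero rational functions that are linearly independent over ℂ, let r ∈ {0, 1, …, n}, and let S be a finite set of places of ℂ(x) (i.e., points c ∈ ℂ together with possibly the place ∞) containing all poles of φ₁, …, φ_n and all zeros of φ₁, …, φ_r. Put σ = φ₁ + ⋯ + φ_n (which is nonzero by linear independence). Then Σ_{ν ∈ S} ( ν(σ) − min_{1≤i≤n} ν(φ_i) ) ≤ C(n,2)·(|S| − 2) + Σ_{i=r+1}^{n} H(φ_i), where C(n,2) = n(n−1)/2. -/

import Mathlib

/-- The places of `ℂ(x)`: a finite place `some c` for each point `c ∈ ℂ`, and the infinite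
place `none`.  `placeVal v f` is the corresponding (additive, normalized) valuation of `f`:
at a finite place `c` it is the order of vanishing of `f` at `c` (negative at poles), and at
the infinite place it is `deg (denom f) − deg (num f)`.  (For `f = 0` these conventions give
`0`, but the theorem below only evaluates it at nonzero functions.) -/
noncomputable def placeVal : Option ℂ → RatFunc ℂ → ℤ
  | none => fun f => (f.denom.natDegree : ℤ) - f.num.natDegree
  | some c => fun f =>
      (Polynomial.rootMultiplicity c f.num : ℤ) - Polynomial.rootMultiplicity c f.denom

/-!
Write `φ i = p i / q` over a common denominator, and let `W` be the Wronskian of the `p i`. At a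
place `v`, replacing the `p j` for which `v (φ j)` is least by `∑ i, p i` does not change `W`, so
`v σ - min_i v (φ i) + ∑ i, v (φ i)` is the sum of the orders of polynomials with Wronskian `W`,
minus `(n + 1) v q`. Neither `(x - c) d/dx` at `c` nor `x d/dx` at infinity lowers orders, so it is
at most `v W ± C(n + 1, 2) - (n + 1) v q`, with sign `+` at the finite places and `-` at infinity.
Summing over `S`, the product formula for `W` and `q` gives `C(n + 1, 2) (|S| - 2)` when `∞ ∈ S`.
If `∞ ∉ S`, then `deg p i ≤ deg q`, and column operations on `W` make the degrees distinct without
raising them; this saves a second `C(n + 1, 2)` in `deg W`. Finally `∑_{v ∈ S} v (φ i)` vanishes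
when `S` contains all zeros and poles of `φ i`, and is at least `-H(φ i)` when it contains all
poles.
-/

section

open Polynomial

section Determinant

variable {R : Type*} [CommRing R] {ι : Type*}

theorem coeff_prod_sum_of_natDegree_le (s : Finset ι) (f : ι → R[X]) (d : ι → ℕ)
    (h : ∀ i ∈ s, (f i).natDegree ≤ d i) :
    (∏ i ∈ s, f i).coeff (∑ i ∈ s, d i) = ∏ i ∈ s, (f i).coeff (d i) := by
  classical
  induction s using Finset.induction_on with
  | empty => simp
  | insert a s ha ih =>
    rw [Finset.forall_mem_insert] at h
    have hprod : (∏ i ∈ s, f i).natDegree ≤ ∑ i ∈ s, d i :=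
      (natDegree_prod_le s f).trans (Finset.sum_le_sum h.2)
    rw [Finset.prod_insert ha, Finset.sum_insert ha, Finset.prod_insert ha,
      coeff_mul_add_eq_of_natDegree_le h.1 hprod, ih h.2]

variable [Fintype ι] [DecidableEq ι]

theorem natDegree_det_le_sum (M : Matrix ι ι R[X]) (d : ι → ℕ)
    (h : ∀ k i, (M k i).natDegree ≤ d i) : M.det.natDegree ≤ ∑ i, d i := by
  rw [Matrix.det_apply]
  refine natDegree_sum_le_of_forall_le _ _ fun σ _ => ?_
  calc (Equiv.Perm.sign σ • ∏ i, M (σ i) i).natDegree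
      ≤ (∏ i, M (σ i) i).natDegree := natDegree_smul_le _ _
    _ ≤ ∑ i, (M (σ i) i).natDegree := natDegree_prod_le _ _
    _ ≤ ∑ i, d i := Finset.sum_le_sum fun i _ => h (σ i) i

theorem coeff_det_sum_of_natDegree_le (M : Matrix ι ι R[X]) (d : ι → ℕ)
    (h : ∀ k i, (M k i).natDegree ≤ d i) :
    M.det.coeff (∑ i, d i) = (Matrix.of fun k i => (M k i).coeff (d i)).det := by
  simp only [Matrix.det_apply, finsetSum_coeff, coeff_smul, Matrix.of_apply]
  exact Finset.sum_congr rfl fun σ _ => congrArg _ <|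
    coeff_prod_sum_of_natDegree_le Finset.univ (fun i => M (σ i) i) d fun i _ => h (σ i) i

theorem prod_dvd_det_of_forall_dvd (M : Matrix ι ι R) (d : ι → R) (h : ∀ k i, d i ∣ M k i) :
    ∏ i, d i ∣ M.det := by
  choose B hB using h
  have hM : M = Matrix.of fun k i => d i * Matrix.of B k i := by
    ext k i
    simp [hB]
  rw [hM, Matrix.det_mul_row]
  exact dvd_mul_right _ _

end Determinant

section FiniteSums

theorem sum_fin_val_eq_choose_two (N : ℕ) : ∑ k : Fin N, (k : ℕ) = N.choose 2 := by
  rw [Fin.sum_univ_eq_sum_range (fun k => k), Finset.sum_range_id, Nat.choose_two_right]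

theorem sum_add_choose_two_le_of_injective {N m : ℕ} {e : Fin N → ℕ} (he : Function.Injective e)
    (hm : ∀ i, e i ≤ m) : ∑ i, e i + N.choose 2 ≤ N * m := by
  have he' : Function.Injective fun i => (e i : ℤ) := Nat.cast_injective.comp he
  have h := Finset.sum_le_sum_range (s := Finset.univ.image fun i => (e i : ℤ)) (c := m)
    (by simpa using hm)
  rw [Finset.card_image_of_injective _ he', Finset.sum_image he'.injOn, Finset.card_fin,
    Finset.sum_sub_distrib, ← Fin.sum_univ_eq_sum_range (fun k => (k : ℤ)), Finset.sum_const,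
    Finset.card_range, nsmul_eq_mul] at h
  rw [← sum_fin_val_eq_choose_two]
  zify
  linarith

theorem sum_eq_sum_eraseNone_add {α M : Type*} [AddCommMonoid M] [DecidableEq α]
    (S : Finset (Option α)) (g : Option α → M) :
    ∑ v ∈ S, g v = ∑ c ∈ S.eraseNone, g (some c) + if none ∈ S then g none else 0 := by
  split_ifs with h
  · rw [← Finset.sum_erase_add _ _ h, ← Finset.map_some_eraseNone, Finset.sum_map]
    rfl
  · conv_lhs => rw [← Finset.erase_eq_of_notMem h, ← Finset.map_some_eraseNone, Finset.sum_map]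
    rw [add_zero]
    rfl

theorem exists_sub_inf'_add_sum_eq_sum_update {ι A : Type*} [Fintype ι] [DecidableEq ι]
    [Nonempty ι] (ord : A → ℤ) (f : ι → A) (a : A) :
    ∃ j, ord a - Finset.univ.inf' Finset.univ_nonempty (fun i => ord (f i)) + ∑ i, ord (f i) =
      ∑ i, ord (Function.update f j a i) := by
  obtain ⟨j, hj, hmin⟩ :=
    Finset.exists_mem_eq_inf' Finset.univ_nonempty fun i => ord (f i)
  refine ⟨j, ?_⟩
  simp only [Function.apply_update fun _ => ord]
  rw [hmin, Finset.sum_update_of_mem hj, ← Finset.add_sum_erase _ _ hj,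
    Finset.sdiff_singleton_eq_erase]
  ring

end FiniteSums

section Wronskian

section CommRing

variable {R : Type*} [CommRing R] {N : ℕ}

/-- The Wronskian matrix of `p₁, …, p_N`, whose rows are the successive derivatives. -/
noncomputable def wronskianMatrix (p : Fin N → R[X]) : Matrix (Fin N) (Fin N) R[X] :=
  Matrix.of fun k i => derivative^[k] (p i)

/-- The Wronskian determinant of a finite family of polynomials. Mathlib's
`Polynomial.wronskian` is the case of two polynomials. -/
noncomputable def wronskianDet (p : Fin N → R[X]) : R[X] :=
  (wronskianMatrix p).det

theorem wronskianMatrix_update (p : Fin N → R[X]) (j : Fin N) (f : R[X]) :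
    wronskianMatrix (Function.update p j f) =
      (wronskianMatrix p).updateCol j fun k => derivative^[k] f := by
  ext1 k i
  rcases eq_or_ne i j with rfl | hij <;> simp [wronskianMatrix, *]

theorem wronskianDet_update_sum (p : Fin N → R[X]) (j : Fin N) :
    wronskianDet (Function.update p j (∑ i, p i)) = wronskianDet p := by
  have h := Matrix.det_updateCol_sum (wronskianMatrix p) j fun _ => 1
  rw [wronskianDet, wronskianMatrix_update, wronskianDet]
  simpa only [iterate_derivative_sum, wronskianMatrix, Matrix.of_apply, one_smul] using h

theorem wronskianDet_update_add_smul (p : Fin N → R[X]) {i j : Fin N} (hij : i ≠ j) (a : R) :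
    wronskianDet (Function.update p i (p i + a • p j)) = wronskianDet p := by
  have h := Matrix.det_updateCol_add_smul_self (wronskianMatrix p) hij (C a)
  rw [wronskianDet, wronskianMatrix_update, wronskianDet]
  simpa only [iterate_map_add, iterate_derivative_C_mul, wronskianMatrix, Matrix.of_apply,
    smul_eq_C_mul, smul_eq_mul] using h

theorem ne_zero_of_wronskianDet_ne_zero {p : Fin N → R[X]} (hW : wronskianDet p ≠ 0)
    (i : Fin N) : p i ≠ 0 := by
  intro hi
  exact hW (Matrix.det_eq_zero_of_column_eq_zero i fun k => by simp [wronskianMatrix, hi])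

theorem det_pow_mul_iterate_derivative (p : Fin N → R[X]) (g : R[X]) :
    (Matrix.of fun k i : Fin N => g ^ (k : ℕ) * derivative^[k] (p i)).det =
      g ^ N.choose 2 * wronskianDet p := by
  rw [← sum_fin_val_eq_choose_two, ← Finset.prod_pow_eq_pow_sum]
  exact Matrix.det_mul_column (fun k : Fin N => g ^ (k : ℕ)) (wronskianMatrix p)

theorem pow_sum_dvd_pow_choose_mul_wronskianDet (p : Fin N → R[X]) (g : R[X]) (e : Fin N → ℕ)
    (h : ∀ i, g ^ e i ∣ p i) : g ^ ∑ i, e i ∣ g ^ N.choose 2 * wronskianDet p := by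
  rw [← det_pow_mul_iterate_derivative, ← Finset.prod_pow_eq_pow_sum]
  refine prod_dvd_det_of_forall_dvd _ _ fun k i => ?_
  calc g ^ e i ∣ g ^ ((k : ℕ) + (e i - k)) := pow_dvd_pow g (by lia)
    _ = g ^ (k : ℕ) * g ^ (e i - k) := pow_add ..
    _ ∣ g ^ (k : ℕ) * derivative^[k] (p i) :=
      mul_dvd_mul_left _ (pow_sub_dvd_iterate_derivative_of_pow_dvd k (h i))

theorem coeff_X_pow_mul_iterate_derivative (p : R[X]) (k n : ℕ) :
    (X ^ k * derivative^[k] p).coeff n = n.descFactorial k * p.coeff n := by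
  rw [coeff_X_pow_mul']
  split_ifs with hkn
  · rw [coeff_iterate_derivative, Nat.sub_add_cancel hkn, nsmul_eq_mul]
  · rw [Nat.descFactorial_eq_zero_iff_lt.2 (not_le.1 hkn), Nat.cast_zero, zero_mul]

theorem natDegree_X_pow_mul_iterate_derivative_le (p : R[X]) (k : ℕ) :
    (X ^ k * derivative^[k] p).natDegree ≤ p.natDegree :=
  natDegree_le_iff_coeff_eq_zero.2 fun n hn => by
    rw [coeff_X_pow_mul_iterate_derivative, coeff_eq_zero_of_natDegree_lt hn, mul_zero]

theorem natDegree_X_pow_choose_mul_wronskianDet_le (p : Fin N → R[X]) :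
    (X ^ N.choose 2 * wronskianDet p).natDegree ≤ ∑ i, (p i).natDegree := by
  rw [← det_pow_mul_iterate_derivative]
  exact natDegree_det_le_sum _ _ fun k i => natDegree_X_pow_mul_iterate_derivative_le (p i) k

end CommRing

section IsDomain

variable {R : Type*} [CommRing R] [IsDomain R] {N : ℕ} {p : Fin N → R[X]}

theorem sum_rootMultiplicity_le_choose_add (hW : wronskianDet p ≠ 0) (c : R) :
    ∑ i, (p i).rootMultiplicity c ≤ N.choose 2 + (wronskianDet p).rootMultiplicity c := by
  have h0 : (X - C c) ^ N.choose 2 * wronskianDet p ≠ 0 :=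
    mul_ne_zero (pow_ne_zero _ (X_sub_C_ne_zero c)) hW
  have h := pow_sum_dvd_pow_choose_mul_wronskianDet p (X - C c)
    (fun i => (p i).rootMultiplicity c) fun i => pow_rootMultiplicity_dvd (p i) c
  rwa [← le_rootMultiplicity_iff h0, rootMultiplicity_mul h0, rootMultiplicity_X_sub_C_pow] at h

theorem choose_add_natDegree_wronskianDet_le (hW : wronskianDet p ≠ 0) :
    N.choose 2 + (wronskianDet p).natDegree ≤ ∑ i, (p i).natDegree := by
  have h := natDegree_X_pow_choose_mul_wronskianDet_le p
  rwa [natDegree_mul (pow_ne_zero _ X_ne_zero) hW, natDegree_X_pow] at h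

theorem det_descFactorial_eq_det_vandermonde (d : Fin N → ℕ) :
    (Matrix.of fun k i : Fin N => ((d i).descFactorial k : R)).det =
      (Matrix.vandermonde fun i => (d i : R)).det := by
  rw [Matrix.det_eval_matrixOfPolynomials_eq_det_vandermonde _
    (fun k : Fin N => descPochhammer R k) (fun k => descPochhammer_natDegree R k)
    (fun k => monic_descPochhammer R k), ← Matrix.det_transpose]
  simp only [descPochhammer_eval_eq_descFactorial]
  rfl

theorem coeff_X_pow_choose_mul_wronskianDet (p : Fin N → R[X]) :
    (X ^ N.choose 2 * wronskianDet p).coeff (∑ i, (p i).natDegree) =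
      (∏ i, (p i).leadingCoeff) * (Matrix.vandermonde fun i => ((p i).natDegree : R)).det := by
  rw [← det_pow_mul_iterate_derivative]
  refine (coeff_det_sum_of_natDegree_le _ _ fun k i =>
    natDegree_X_pow_mul_iterate_derivative_le (p i) k).trans ?_
  simp only [coeff_X_pow_mul_iterate_derivative, coeff_natDegree]
  rw [← det_descFactorial_eq_det_vandermonde, ← Matrix.det_mul_row]
  simp only [Matrix.of_apply, mul_comm]

theorem wronskianDet_ne_zero_of_natDegree_injective [CharZero R] (h0 : ∀ i, p i ≠ 0)
    (hinj : Function.Injective fun i => (p i).natDegree) : wronskianDet p ≠ 0 := by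
  intro hW
  have hcoeff := coeff_X_pow_choose_mul_wronskianDet p
  rw [hW, mul_zero, coeff_zero] at hcoeff
  have hlead : ∏ i, (p i).leadingCoeff ≠ 0 :=
    Finset.prod_ne_zero_iff.2 fun i _ => leadingCoeff_ne_zero.2 (h0 i)
  have hvand : (Matrix.vandermonde fun i => ((p i).natDegree : R)).det ≠ 0 :=
    Matrix.det_vandermonde_ne_zero_iff.2 (Nat.cast_injective.comp hinj)
  exact mul_ne_zero hlead hvand hcoeff.symm

end IsDomain

section Field

variable {K : Type*} [Field K] {N : ℕ}

theorem linearIndependent_update_add_smul {V ι : Type*} [AddCommGroup V] [Module K V]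
    [DecidableEq ι] {p : ι → V} (hp : LinearIndependent K p) {i j : ι} (hij : i ≠ j) (a : K) :
    LinearIndependent K (Function.update p i (p i + a • p j)) := by
  have hupdate : Function.update p i (p i + a • p j) =
      p + fun l => (Pi.single i a : ι → K) l • p j := by
    ext1 l
    rcases eq_or_ne l i with rfl | hl <;> simp [*]
  rw [hupdate, linearIndependent_add_smul_iff (by simp [hij.symm])]
  exact hp

theorem natDegree_add_smul_lt {f g : K[X]} (hg : g ≠ 0) (hdeg : f.natDegree = g.natDegree)
    (hne : f + (-(f.leadingCoeff / g.leadingCoeff)) • g ≠ 0) :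
    (f + (-(f.leadingCoeff / g.leadingCoeff)) • g).natDegree < f.natDegree := by
  have hg' : g.leadingCoeff ≠ 0 := leadingCoeff_ne_zero.2 hg
  have hle : (f + (-(f.leadingCoeff / g.leadingCoeff)) • g).natDegree ≤ f.natDegree :=
    natDegree_add_le_of_degree_le le_rfl ((natDegree_smul_le _ _).trans hdeg.ge)
  refine hle.lt_of_ne fun heq => hne (leadingCoeff_eq_zero.1 ?_)
  rw [leadingCoeff, heq, coeff_add, coeff_smul, coeff_natDegree, hdeg, coeff_natDegree,
    smul_eq_mul, neg_mul, div_mul_cancel₀ _ hg', add_neg_cancel]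

theorem exists_natDegree_injective_wronskianDet_eq (p : Fin N → K[X])
    (hp : LinearIndependent K p) :
    ∃ q : Fin N → K[X], (∀ i, q i ≠ 0) ∧ (Function.Injective fun i => (q i).natDegree) ∧
      (∀ i, (q i).natDegree ≤ (p i).natDegree) ∧ wronskianDet q = wronskianDet p := by
  induction hs : ∑ i, (p i).natDegree using Nat.strong_induction_on generalizing p with
  | _ s ih =>
  by_cases hinj : Function.Injective fun i => (p i).natDegree
  · exact ⟨p, hp.ne_zero, hinj, fun _ => le_rfl, rfl⟩
  obtain ⟨i, j, hdeg, hij⟩ : ∃ i j, (p i).natDegree = (p j).natDegree ∧ i ≠ j := by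
    simpa [Function.Injective] using hinj
  set a : K := -((p i).leadingCoeff / (p j).leadingCoeff)
  have hli := linearIndependent_update_add_smul hp hij a
  have hlt : (p i + a • p j).natDegree < (p i).natDegree :=
    natDegree_add_smul_lt (hp.ne_zero j) hdeg
      (by simpa only [Function.update_self] using hli.ne_zero i)
  have hle : ∀ l, (Function.update p i (p i + a • p j) l).natDegree ≤ (p l).natDegree := by
    intro l
    rcases eq_or_ne l i with rfl | hl
    · simpa using hlt.le
    · simp [hl]
  have hsum : ∑ l, (Function.update p i (p i + a • p j) l).natDegree < s :=
    hs ▸ Finset.sum_lt_sum (fun l _ => hle l) ⟨i, Finset.mem_univ i, by simpa using hlt⟩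
  obtain ⟨q, hq0, hqinj, hqle, hqW⟩ := ih _ hsum _ hli rfl
  exact ⟨q, hq0, hqinj, fun l => (hqle l).trans (hle l),
    hqW.trans (wronskianDet_update_add_smul p hij a)⟩

variable [CharZero K] {p : Fin N → K[X]}

theorem wronskianDet_ne_zero (hp : LinearIndependent K p) : wronskianDet p ≠ 0 := by
  obtain ⟨q, hq0, hqinj, -, hqW⟩ := exists_natDegree_injective_wronskianDet_eq p hp
  exact hqW ▸ wronskianDet_ne_zero_of_natDegree_injective hq0 hqinj

theorem two_mul_choose_add_natDegree_wronskianDet_le {m : ℕ} (hp : LinearIndependent K p)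
    (hm : ∀ i, (p i).natDegree ≤ m) :
    2 * N.choose 2 + (wronskianDet p).natDegree ≤ N * m := by
  obtain ⟨q, hq0, hqinj, hqle, hqW⟩ := exists_natDegree_injective_wronskianDet_eq p hp
  have hdeg := choose_add_natDegree_wronskianDet_le
    (wronskianDet_ne_zero_of_natDegree_injective hq0 hqinj)
  have hsum := sum_add_choose_two_le_of_injective hqinj fun i => (hqle i).trans (hm i)
  rw [← hqW]
  lia

end Field

end Wronskian

section Roots

variable {R : Type*} [CommRing R] [IsDomain R]

theorem sum_rootMultiplicity_le_natDegree (p : R[X]) (T : Finset R) :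
    ∑ c ∈ T, p.rootMultiplicity c ≤ p.natDegree := by
  classical
  calc ∑ c ∈ T, p.rootMultiplicity c = ∑ c ∈ T, p.roots.count c := by simp only [count_roots]
    _ ≤ ∑ c ∈ T ∪ p.roots.toFinset, p.roots.count c :=
      Finset.sum_le_sum_of_subset Finset.subset_union_left
    _ = p.roots.card := Multiset.sum_count_eq_card fun c hc =>
      Finset.mem_union_right _ (Multiset.mem_toFinset.2 hc)
    _ ≤ p.natDegree := card_roots' p

theorem sum_rootMultiplicity_eq_natDegree {p : R[X]} (hp : p.Splits) {T : Finset R}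
    (hT : ∀ c, p.IsRoot c → c ∈ T) : ∑ c ∈ T, p.rootMultiplicity c = p.natDegree := by
  classical
  calc ∑ c ∈ T, p.rootMultiplicity c = ∑ c ∈ T, p.roots.count c := by simp only [count_roots]
    _ = p.roots.card := Multiset.sum_count_eq_card fun c hc => hT c (isRoot_of_mem_roots hc)
    _ = p.natDegree := hp.natDegree_eq_card_roots.symm

end Roots

section Places

variable {K : Type*} [Field K]

/-- The valuation on `K[X]` at a degree-one place of `K(x)`: the order of vanishing at `c` for
`some c`, and minus the degree for the infinite place `none`. Its value at `0` is the junk value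
`0`. -/
noncomputable def polyOrder : Option K → K[X] → ℤ
  | none, p => -p.natDegree
  | some c, p => p.rootMultiplicity c

/-- The valuation on `K(x)` at a degree-one place, encoded as in `polyOrder`; over `ℂ` it is
`placeVal`. -/
noncomputable def placeOrder (v : Option K) (f : RatFunc K) : ℤ :=
  polyOrder v f.num - polyOrder v f.denom

/-- The height of a rational function, i.e. its degree as a map to the projective line. -/
noncomputable def ratHeight (f : RatFunc K) : ℤ :=
  max (f.num.natDegree : ℤ) f.denom.natDegree

/-- The order at a place of the factor (`x - c` at `c`, and `x` at infinity) by which `d/dx` has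
to be multiplied in order not to lower valuations there. -/
def eulerOrder : Option K → ℤ
  | none => -1
  | some _ => 1

theorem polyOrder_mul (v : Option K) {p q : K[X]} (hp : p ≠ 0) (hq : q ≠ 0) :
    polyOrder v (p * q) = polyOrder v p + polyOrder v q := by
  cases v with
  | none => simp only [polyOrder, natDegree_mul hp hq, Nat.cast_add, neg_add]
  | some c => simp only [polyOrder, rootMultiplicity_mul (mul_ne_zero hp hq), Nat.cast_add]

theorem placeOrder_algebraMap_div (v : Option K) {p q : K[X]} (hp : p ≠ 0) (hq : q ≠ 0) :
    placeOrder v (algebraMap K[X] (RatFunc K) p / algebraMap K[X] (RatFunc K) q) =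
      polyOrder v p - polyOrder v q := by
  set f := algebraMap K[X] (RatFunc K) p / algebraMap K[X] (RatFunc K) q
  have hf : f.num ≠ 0 := RatFunc.num_ne_zero <|
    div_ne_zero (RatFunc.algebraMap_ne_zero hp) (RatFunc.algebraMap_ne_zero hq)
  have hcross : f.num * q = p * f.denom := (RatFunc.num_mul_eq_mul_denom_iff hq).2 rfl
  have h := congrArg (polyOrder v) hcross
  rw [polyOrder_mul v hf hq, polyOrder_mul v hp f.denom_ne_zero] at h
  rw [placeOrder]
  linarith

theorem rootMultiplicity_num_eq_zero_or_denom (f : RatFunc K) (c : K) :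
    f.num.rootMultiplicity c = 0 ∨ f.denom.rootMultiplicity c = 0 := by
  by_contra! h
  obtain ⟨a, b, hab⟩ := f.isCoprime_num_denom
  have hnum : f.num.eval c = 0 := (rootMultiplicity_pos'.1 (Nat.pos_of_ne_zero h.1)).2
  have hdenom : f.denom.eval c = 0 := (rootMultiplicity_pos'.1 (Nat.pos_of_ne_zero h.2)).2
  simpa [hnum, hdenom] using congrArg (eval c) hab

theorem placeOrder_some_neg_of_isRoot_denom {f : RatFunc K} {c : K} (h : f.denom.IsRoot c) :
    placeOrder (some c) f < 0 := by
  have hpos := (rootMultiplicity_pos f.denom_ne_zero).2 h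
  have hcop := rootMultiplicity_num_eq_zero_or_denom f c
  simp only [placeOrder, polyOrder]
  lia

theorem placeOrder_some_pos_of_isRoot_num {f : RatFunc K} (hf : f ≠ 0) {c : K}
    (h : f.num.IsRoot c) : 0 < placeOrder (some c) f := by
  have hpos := (rootMultiplicity_pos (RatFunc.num_ne_zero hf)).2 h
  have hcop := rootMultiplicity_num_eq_zero_or_denom f c
  simp only [placeOrder, polyOrder]
  lia

theorem sum_placeOrder_eq (f : RatFunc K) (S : Finset (Option K)) [DecidableEq K] :
    ∑ v ∈ S, placeOrder v f =
      ∑ c ∈ S.eraseNone, (f.num.rootMultiplicity c : ℤ) -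
        ∑ c ∈ S.eraseNone, (f.denom.rootMultiplicity c : ℤ) +
        if none ∈ S then (f.denom.natDegree : ℤ) - f.num.natDegree else 0 := by
  rw [sum_eq_sum_eraseNone_add, ← Finset.sum_sub_distrib]
  simp only [placeOrder, polyOrder, sub_neg_eq_add, neg_add_eq_sub]

section IsAlgClosed

variable [IsAlgClosed K] {f : RatFunc K} {S : Finset (Option K)}

theorem sum_rootMultiplicity_denom_eq (hpoles : ∀ v, placeOrder v f < 0 → v ∈ S) :
    ∑ c ∈ S.eraseNone, (f.denom.rootMultiplicity c : ℤ) = f.denom.natDegree := by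
  exact_mod_cast sum_rootMultiplicity_eq_natDegree (IsAlgClosed.splits f.denom) fun c hc =>
    Finset.mem_eraseNone.2 (hpoles _ (placeOrder_some_neg_of_isRoot_denom hc))

theorem neg_sum_placeOrder_le_ratHeight (hpoles : ∀ v, placeOrder v f < 0 → v ∈ S) :
    -∑ v ∈ S, placeOrder v f ≤ ratHeight f := by
  classical
  have hnum : 0 ≤ ∑ c ∈ S.eraseNone, (f.num.rootMultiplicity c : ℤ) :=
    Finset.sum_nonneg fun _ _ => Int.natCast_nonneg _
  rw [sum_placeOrder_eq, sum_rootMultiplicity_denom_eq hpoles, ratHeight]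
  split_ifs <;> lia

theorem sum_placeOrder_eq_zero (hf : f ≠ 0) (hpoles : ∀ v, placeOrder v f < 0 → v ∈ S)
    (hzeros : ∀ v, 0 < placeOrder v f → v ∈ S) : ∑ v ∈ S, placeOrder v f = 0 := by
  classical
  have hnum : ∑ c ∈ S.eraseNone, (f.num.rootMultiplicity c : ℤ) = f.num.natDegree := by
    exact_mod_cast sum_rootMultiplicity_eq_natDegree (IsAlgClosed.splits f.num) fun c hc =>
      Finset.mem_eraseNone.2 (hzeros _ (placeOrder_some_pos_of_isRoot_num hf hc))
  rw [sum_placeOrder_eq, sum_rootMultiplicity_denom_eq hpoles, hnum]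
  split_ifs with hinf
  · ring
  · have hneg := mt (hpoles none) hinf
    have hpos := mt (hzeros none) hinf
    simp only [placeOrder, polyOrder] at hneg hpos
    lia

theorem neg_sum_sum_placeOrder_le {ι : Type*} [Fintype ι] {φ : ι → RatFunc K}
    (hφ : ∀ i, φ i ≠ 0) (U : Finset ι)
    (hpoles : ∀ i v, placeOrder v (φ i) < 0 → v ∈ S)
    (hzeros : ∀ i ∉ U, ∀ v, 0 < placeOrder v (φ i) → v ∈ S) :
    -∑ v ∈ S, ∑ i, placeOrder v (φ i) ≤ ∑ i ∈ U, ratHeight (φ i) := by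
  have hunits : ∀ i ∉ U, -∑ v ∈ S, placeOrder v (φ i) = 0 := fun i hi => by
    rw [sum_placeOrder_eq_zero (hφ i) (hpoles i) (hzeros i hi), neg_zero]
  rw [Finset.sum_comm, ← Finset.sum_neg_distrib,
    ← Finset.sum_subset U.subset_univ fun i _ hi => hunits i hi]
  exact Finset.sum_le_sum fun i _ => neg_sum_placeOrder_le_ratHeight (hpoles i)

end IsAlgClosed

theorem sum_polyOrder_le {N : ℕ} {p : Fin N → K[X]} (hW : wronskianDet p ≠ 0) (v : Option K) :
    ∑ i, polyOrder v (p i) ≤ polyOrder v (wronskianDet p) + N.choose 2 * eulerOrder v := by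
  cases v with
  | none =>
    have h := choose_add_natDegree_wronskianDet_le hW
    simp only [polyOrder, eulerOrder, Finset.sum_neg_distrib]
    zify at h
    linarith
  | some c =>
    have h := sum_rootMultiplicity_le_choose_add hW c
    simp only [polyOrder, eulerOrder]
    zify at h
    linarith

theorem sum_placeOrder_algebraMap_div_le {N : ℕ} {p : Fin N → K[X]} (hW : wronskianDet p ≠ 0)
    {q : K[X]} (hq : q ≠ 0) (v : Option K) :
    ∑ i, placeOrder v (algebraMap K[X] (RatFunc K) (p i) / algebraMap K[X] (RatFunc K) q) ≤
      polyOrder v (wronskianDet p) + N.choose 2 * eulerOrder v - N * polyOrder v q := by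
  simp only [fun i => placeOrder_algebraMap_div v (ne_zero_of_wronskianDet_ne_zero hW i) hq,
    Finset.sum_sub_distrib, Finset.sum_const, Finset.card_univ, Fintype.card_fin, nsmul_eq_mul]
  exact sub_le_sub_right (sum_polyOrder_le hW v) _

theorem placeOrder_sum_sub_inf'_add_sum_le {n : ℕ} {p : Fin (n + 1) → K[X]}
    (hW : wronskianDet p ≠ 0) {q : K[X]} (hq : q ≠ 0) {φ : Fin (n + 1) → RatFunc K}
    (hφ : ∀ i, φ i = algebraMap K[X] (RatFunc K) (p i) / algebraMap K[X] (RatFunc K) q)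
    (v : Option K) :
    placeOrder v (∑ i, φ i) -
        Finset.univ.inf' Finset.univ_nonempty (fun i => placeOrder v (φ i)) +
        ∑ i, placeOrder v (φ i) ≤
      polyOrder v (wronskianDet p) + (n + 1).choose 2 * eulerOrder v -
        (n + 1 : ℕ) * polyOrder v q := by
  obtain ⟨j, hj⟩ := exists_sub_inf'_add_sum_eq_sum_update (placeOrder v) φ (∑ i, φ i)
  have hupdate : ∀ i, Function.update φ j (∑ i, φ i) i =
      algebraMap K[X] (RatFunc K) (Function.update p j (∑ i, p i) i) /
        algebraMap K[X] (RatFunc K) q := by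
    intro i
    rcases eq_or_ne i j with rfl | hij
    · simp only [Function.update_self, map_sum, Finset.sum_div, hφ]
    · simp only [Function.update_of_ne hij, hφ]
  rw [hj, ← wronskianDet_update_sum p j]
  simp only [hupdate]
  exact sum_placeOrder_algebraMap_div_le (by rwa [wronskianDet_update_sum]) hq v

theorem sum_polyOrder_wronskianDet_le [CharZero K] {N : ℕ} {p : Fin N → K[X]}
    (hp : LinearIndependent K p) {q : K[X]} (hq : q.Splits) {S : Finset (Option K)}
    (hroots : ∀ c, q.IsRoot c → some c ∈ S)
    (hinf : none ∉ S → ∀ i, (p i).natDegree ≤ q.natDegree) :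
    ∑ v ∈ S, (polyOrder v (wronskianDet p) + N.choose 2 * eulerOrder v - N * polyOrder v q) ≤
      N.choose 2 * ((S.card : ℤ) - 2) := by
  classical
  have hWsum : ∑ c ∈ S.eraseNone, ((wronskianDet p).rootMultiplicity c : ℤ) ≤
      (wronskianDet p).natDegree := by
    exact_mod_cast sum_rootMultiplicity_le_natDegree (wronskianDet p) S.eraseNone
  have hqsum : ∑ c ∈ S.eraseNone, (q.rootMultiplicity c : ℤ) = q.natDegree := by
    exact_mod_cast sum_rootMultiplicity_eq_natDegree hq fun c hc =>
      Finset.mem_eraseNone.2 (hroots c hc)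
  have hcard : (S.card : ℤ) = S.eraseNone.card + if none ∈ S then 1 else 0 := by
    simpa using sum_eq_sum_eraseNone_add S fun _ => (1 : ℤ)
  simp only [sum_eq_sum_eraseNone_add S, polyOrder, eulerOrder, hcard, Finset.sum_sub_distrib,
    Finset.sum_add_distrib, ← Finset.mul_sum, hqsum, Finset.sum_const, nsmul_eq_mul]
  split_ifs with h
  · linarith
  · have hdeg := two_mul_choose_add_natDegree_wronskianDet_le hp (hinf h)
    zify at hdeg
    linarith

theorem linearIndependent_of_algebraMap_div {ι : Type*} {p : ι → K[X]} {q : K[X]}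
    (h : LinearIndependent K fun i =>
      algebraMap K[X] (RatFunc K) (p i) / algebraMap K[X] (RatFunc K) q) :
    LinearIndependent K p := by
  let divLinear : K[X] →ₗ[K] RatFunc K :=
    LinearMap.mulRight K (algebraMap K[X] (RatFunc K) q)⁻¹ ∘ₗ
      (IsScalarTower.toAlgHom K K[X] (RatFunc K)).toLinearMap
  refine LinearIndependent.of_comp divLinear ?_
  have hdiv : divLinear ∘ p = fun i =>
      algebraMap K[X] (RatFunc K) (p i) / algebraMap K[X] (RatFunc K) q := by
    ext1 i
    exact (div_eq_mul_inv _ _).symm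
  rwa [hdiv]

theorem exists_common_denom {ι : Type*} [Finite ι] (φ : ι → RatFunc K) :
    ∃ (q : K[X]) (p : ι → K[X]), q ≠ 0 ∧
      (∀ i, φ i = algebraMap K[X] (RatFunc K) (p i) / algebraMap K[X] (RatFunc K) q) ∧
      ∀ c, q.IsRoot c → ∃ i, (φ i).denom.IsRoot c := by
  have := Fintype.ofFinite ι
  have hq : ∏ i, (φ i).denom ≠ 0 := Finset.prod_ne_zero_iff.2 fun i _ => (φ i).denom_ne_zero
  choose p hp using fun i =>
    (RatFunc.denom_dvd hq).1 (Finset.dvd_prod_of_mem (fun i => (φ i).denom) (Finset.mem_univ i))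
  refine ⟨∏ i, (φ i).denom, p, hq, hp, fun c hc => ?_⟩
  simpa [IsRoot, eval_prod, Finset.prod_eq_zero_iff] using hc

end Places

section Main

variable {K : Type*} [Field K] [IsAlgClosed K] [CharZero K]

theorem sum_placeOrder_sum_sub_inf'_add_sum_le {n : ℕ} {φ : Fin (n + 1) → RatFunc K}
    (hli : LinearIndependent K φ) {S : Finset (Option K)}
    (hpoles : ∀ i v, placeOrder v (φ i) < 0 → v ∈ S) :
    ∑ v ∈ S, (placeOrder v (∑ i, φ i) -
        Finset.univ.inf' Finset.univ_nonempty (fun i => placeOrder v (φ i)) +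
        ∑ i, placeOrder v (φ i)) ≤
      ((n + 1).choose 2 : ℤ) * ((S.card : ℤ) - 2) := by
  obtain ⟨q, p, hq, hφ, hroots⟩ := exists_common_denom φ
  have hp : LinearIndependent K p := linearIndependent_of_algebraMap_div (q := q) <| by
    rwa [← funext hφ]
  have hrootsS : ∀ c, q.IsRoot c → some c ∈ S := by
    intro c hc
    obtain ⟨i, hi⟩ := hroots c hc
    exact hpoles i _ (placeOrder_some_neg_of_isRoot_denom hi)
  have hdegree : none ∉ S → ∀ i, (p i).natDegree ≤ q.natDegree := by
    intro hinf i
    have hi := mt (hpoles i none) hinf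
    rw [hφ, placeOrder_algebraMap_div none (hp.ne_zero i) hq] at hi
    simpa [polyOrder] using hi
  calc _ ≤ ∑ v ∈ S, (polyOrder v (wronskianDet p) + (n + 1).choose 2 * eulerOrder v -
        (n + 1 : ℕ) * polyOrder v q) := Finset.sum_le_sum fun v _ =>
      placeOrder_sum_sub_inf'_add_sum_le (wronskianDet_ne_zero hp) hq hφ v
    _ ≤ _ := sum_polyOrder_wronskianDet_le hp (IsAlgClosed.splits q) hrootsS hdegree

theorem stmt11_general {n : ℕ} {φ : Fin (n + 1) → RatFunc K} (hli : LinearIndependent K φ)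
    (U : Finset (Fin (n + 1))) {S : Finset (Option K)}
    (hpoles : ∀ i v, placeOrder v (φ i) < 0 → v ∈ S)
    (hzeros : ∀ i ∉ U, ∀ v, 0 < placeOrder v (φ i) → v ∈ S) :
    ∑ v ∈ S, (placeOrder v (∑ i, φ i) -
        Finset.univ.inf' Finset.univ_nonempty (fun i => placeOrder v (φ i))) ≤
      ((n + 1).choose 2 : ℤ) * ((S.card : ℤ) - 2) + ∑ i ∈ U, ratHeight (φ i) := by
  have hwronskian := sum_placeOrder_sum_sub_inf'_add_sum_le hli hpoles
  have hheights := neg_sum_sum_placeOrder_le hli.ne_zero U hpoles hzeros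
  rw [Finset.sum_add_distrib] at hwronskian
  linarith

theorem placeVal_eq_placeOrder (v : Option ℂ) (f : RatFunc ℂ) : placeVal v f = placeOrder v f := by
  cases v <;> simp only [placeVal, placeOrder, polyOrder]
  ring

end Main

end

/-- **Zannier's function-field subspace theorem, genus-0 instance for `ℂ(x)`.**
Let `φ₀, …, φ_n ∈ ℂ(x)` be nonzero and linearly independent over `ℂ`, let `r ≤ n + 1`, and
let `S` be a finite set of places of `ℂ(x)` containing all poles of all the `φ i` and all
zeros of `φ i` for `i < r`.  With `σ = ∑ i, φ i` one has
`∑_{v ∈ S} (v(σ) − min_i v(φ i)) ≤ C(n+1, 2)·(|S| − 2) + ∑_{i ≥ r} H(φ i)`,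
where `H(φ) = max (deg num) (deg denom)` is the height. -/
theorem stmt11 (n : ℕ) (φ : Fin (n + 1) → RatFunc ℂ) (hφ : ∀ i, φ i ≠ 0)
    (hli : LinearIndependent ℂ φ) (r : ℕ) (hr : r ≤ n + 1)
    (S : Finset (Option ℂ))
    (hpoles : ∀ i : Fin (n + 1), ∀ v : Option ℂ, placeVal v (φ i) < 0 → v ∈ S)
    (hzeros : ∀ i : Fin (n + 1), (i : ℕ) < r → ∀ v : Option ℂ,
      0 < placeVal v (φ i) → v ∈ S) :
    ∑ v ∈ S, (placeVal v (∑ i, φ i) -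
        Finset.univ.inf' Finset.univ_nonempty (fun i => placeVal v (φ i))) ≤
      ((n + 1).choose 2 : ℤ) * ((S.card : ℤ) - 2) +
        ∑ i ∈ Finset.univ.filter (fun i : Fin (n + 1) => r ≤ (i : ℕ)),
          (max (φ i).num.natDegree (φ i).denom.natDegree : ℤ) := by
  simp only [placeVal_eq_placeOrder] at hpoles hzeros ⊢
  exact stmt11_general hli _ hpoles fun i hi => hzeros i (by simpa using hi)
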